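/- arXiv:2107.11438 — 8 statements merged into one kernel-verified Lean document; each statement's English description precedes it below -/
import Mathlib

section
/- Let n ≥ 1, k ≥ 3, let v_1, …, v_n be an orthonormal basis of the Euclidean space ℝⁿ, let λ_1, …, λ_n ∈ ℝ and α_1, …, α_n ∈ ℝ, and suppose λ_r·α_r^{k−2} ≤ 0 for every r. Define x : ℝ → ℝⁿ by x(t) = ∑_{r=1}^n α_r·(1 − (k−2)·λ_r·α_r^{k−2}·t)^{−1/(k−2)}·v_r. Then for every t ≥ 0 one has 1 − (k−2)·λ_r·α_r^{k−2}·t > 0 for all r, and ‖x(t)‖ ≤ √n·‖x(0)‖, where ‖·‖ is the Euclidean norm; that is, the equilibrium point at the origin is stable for this initial condition. -/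
/-!
The `r`-th coefficient of the solution is `α r` times a power, with negative exponent, of an affine
function of time that starts at `1` and has nonnegative slope. So every coefficient shrinks in
absolute value, and by Pythagoras the norm of the solution is nonincreasing for `t ≥ 0`.
-/

open Set

theorem one_sub_mul_pos_of_nonpos {R : Type*} [Ring R] [PartialOrder R] [IsStrictOrderedRing R]
    {m t : R} (hm : m ≤ 0) (ht : 0 ≤ t) : 0 < 1 - m * t :=
  sub_pos.2 ((mul_nonpos_of_nonpos_of_nonneg hm ht).trans_lt one_pos)

theorem antitoneOn_one_sub_mul_rpow {m q : ℝ} (hm : m ≤ 0) (hq : q ≤ 0) :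
    AntitoneOn (fun t : ℝ ↦ (1 - m * t) ^ q) (Ici 0) := by
  intro s hs t _ hst
  have base_le : 1 - m * s ≤ 1 - m * t :=
    sub_le_sub_left (mul_le_mul_of_nonpos_left hst hm) 1
  exact Real.rpow_le_rpow_of_nonpos (one_sub_mul_pos_of_nonpos hm hs) base_le hq

theorem norm_sum_smul_le_norm_sum_smul_of_orthonormal {𝕜 E ι : Type*} [RCLike 𝕜]
    [SeminormedAddCommGroup E] [InnerProductSpace 𝕜 E] {v : ι → E} (hv : Orthonormal 𝕜 v)
    {s : Finset ι} {a b : ι → 𝕜} (hab : ∀ r ∈ s, ‖a r‖ ≤ ‖b r‖) :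
    ‖∑ r ∈ s, a r • v r‖ ≤ ‖∑ r ∈ s, b r • v r‖ := by
  have norm_sq (c : ι → 𝕜) : ‖∑ r ∈ s, c r • v r‖ ^ 2 = ∑ r ∈ s, ‖c r‖ ^ 2 :=
    hv.orthogonalFamily.norm_sum c s
  refine le_of_sq_le_sq ?_ (norm_nonneg _)
  rw [norm_sq, norm_sq]
  gcongr with r hr
  exact hab r hr

theorem stmt_4_general {E ι : Type*} [SeminormedAddCommGroup E] [InnerProductSpace ℝ E]
    [Fintype ι] {k : ℕ} (hk : 3 ≤ k) {v : ι → E} (hv : Orthonormal ℝ v) {lam α : ι → ℝ}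
    (hneg : ∀ r, lam r * α r ^ (k - 2) ≤ 0) {x : ℝ → E}
    (hx : ∀ t, x t = ∑ r,
      (α r * (1 - ((k : ℝ) - 2) * lam r * α r ^ (k - 2) * t) ^ (-1 / ((k : ℝ) - 2))) • v r) :
    (∀ t, 0 ≤ t → ∀ r, 0 < 1 - ((k : ℝ) - 2) * lam r * α r ^ (k - 2) * t) ∧
      AntitoneOn (fun t ↦ ‖x t‖) (Ici 0) := by
  have sub_two_nonneg : 0 ≤ (k : ℝ) - 2 := sub_nonneg.2 (by exact_mod_cast (by omega : 2 ≤ k))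
  have rate_nonpos (r : ι) : ((k : ℝ) - 2) * lam r * α r ^ (k - 2) ≤ 0 := by
    rw [mul_assoc]
    exact mul_nonpos_of_nonneg_of_nonpos sub_two_nonneg (hneg r)
  have exponent_nonpos : -1 / ((k : ℝ) - 2) ≤ 0 :=
    div_nonpos_of_nonpos_of_nonneg (by norm_num) sub_two_nonneg
  have base_pos {t : ℝ} (ht : 0 ≤ t) (r : ι) :=
    one_sub_mul_pos_of_nonpos (rate_nonpos r) ht
  refine ⟨fun t ht ↦ base_pos ht, fun s hs t ht hst ↦ ?_⟩
  simp only [hx]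
  refine norm_sum_smul_le_norm_sum_smul_of_orthonormal hv fun r _ ↦ ?_
  rw [norm_mul, norm_mul, Real.norm_of_nonneg (Real.rpow_nonneg (base_pos ht r).le _),
    Real.norm_of_nonneg (Real.rpow_nonneg (base_pos hs r).le _)]
  gcongr ‖α r‖ * ?_
  exact antitoneOn_one_sub_mul_rpow (rate_nonpos r) exponent_nonpos hs ht hst

/-- Proposition 3, condition (1) (sufficiency): if `λ_r α_r^{k-2} ≤ 0` for all `r`, the
solution is defined for all `t ≥ 0` and `‖x t‖ ≤ √n ‖x 0‖`, i.e. the origin is stable. -/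
theorem stmt_4 (n k : ℕ) (hn : 1 ≤ n) (hk : 3 ≤ k)
    (v : OrthonormalBasis (Fin n) ℝ (EuclideanSpace ℝ (Fin n)))
    (lam α : Fin n → ℝ)
    (hneg : ∀ r : Fin n, lam r * α r ^ (k - 2) ≤ 0)
    (x : ℝ → EuclideanSpace ℝ (Fin n))
    (hx : ∀ t : ℝ, x t = ∑ r : Fin n,
      (α r * (1 - ((k : ℝ) - 2) * lam r * α r ^ (k - 2) * t) ^ (-1 / ((k : ℝ) - 2))) • v r) :
    ∀ t : ℝ, 0 ≤ t →
      (∀ r : Fin n, 0 < 1 - ((k : ℝ) - 2) * lam r * α r ^ (k - 2) * t) ∧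
      ‖x t‖ ≤ Real.sqrt n * ‖x 0‖ := by
  intro t ht
  obtain ⟨base_pos, norm_antitone⟩ := stmt_4_general hk v.orthonormal hneg hx
  exact ⟨base_pos t ht, (norm_antitone self_mem_Ici ht ht).trans <|
    le_mul_of_one_le_left (norm_nonneg _) (Real.one_le_sqrt.2 (by exact_mod_cast hn))⟩
end

section
/- Let n ≥ 1, k ≥ 3, let v_1, …, v_n be an orthonormal basis of the Euclidean space ℝⁿ, let λ_1, …, λ_n ∈ ℝ and α_1, …, α_n ∈ ℝ, and suppose λ_r·α_r^{k−2} < 0 for every r. Define x : ℝ → ℝⁿ by x(t) = ∑_{r=1}^n α_r·(1 − (k−2)·λ_r·α_r^{k−2}·t)^{−1/(k−2)}·v_r. Then x(t) → 0 as t → +∞; that is, the equilibrium point at the origin is asymptotically stable for this initial condition. -/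
open Filter Topology

theorem tendsto_sub_mul_atTop_of_neg {𝕜 : Type*} [Field 𝕜] [LinearOrder 𝕜] [IsStrictOrderedRing 𝕜]
    {c : 𝕜} (b : 𝕜) (hc : c < 0) : Tendsto (fun t : 𝕜 => b - c * t) atTop atTop := by
  simpa only [id_eq, neg_mul, ← sub_eq_add_neg] using
    tendsto_atTop_add_const_left atTop b (tendsto_id.const_mul_atTop (neg_pos.mpr hc))

theorem tendsto_sub_mul_rpow_neg_atTop {c q : ℝ} (b : ℝ) (hc : c < 0) (hq : 0 < q) :
    Tendsto (fun t : ℝ => (b - c * t) ^ (-q)) atTop (𝓝 0) :=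
  (tendsto_rpow_neg_atTop hq).comp (tendsto_sub_mul_atTop_of_neg b hc)

theorem stmt_5_general {ι E : Type*} [Fintype ι] [AddCommMonoid E] [Module ℝ E]
    [TopologicalSpace E] [ContinuousAdd E] [ContinuousSMul ℝ E] {q : ℝ} (hq : 0 < q)
    (v : ι → E) (a : ι → ℝ) {c : ι → ℝ} (hc : ∀ r, c r < 0) :
    Tendsto (fun t : ℝ => ∑ r, (a r * (1 - c r * t) ^ (-q)) • v r) atTop (𝓝 0) := by
  have hmode (r : ι) :
      Tendsto (fun t : ℝ => (a r * (1 - c r * t) ^ (-q)) • v r) atTop (𝓝 0) := by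
    simpa only [mul_zero, zero_smul] using
      ((tendsto_sub_mul_rpow_neg_atTop 1 (hc r) hq).const_mul (a r)).smul_const (v r)
  simpa only [Finset.sum_const_zero] using tendsto_finsetSum Finset.univ fun r _ => hmode r

/-- Proposition 3, condition (2) (sufficiency): if `λ_r α_r^{k-2} < 0` for all `r`, the
solution tends to `0` as `t → +∞`, i.e. the origin is asymptotically stable. -/
theorem stmt_5 (n k : ℕ) (hn : 1 ≤ n) (hk : 3 ≤ k)
    (v : OrthonormalBasis (Fin n) ℝ (EuclideanSpace ℝ (Fin n)))
    (lam α : Fin n → ℝ)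
    (hneg : ∀ r : Fin n, lam r * α r ^ (k - 2) < 0)
    (x : ℝ → EuclideanSpace ℝ (Fin n))
    (hx : ∀ t : ℝ, x t = ∑ r : Fin n,
      (α r * (1 - ((k : ℝ) - 2) * lam r * α r ^ (k - 2) * t) ^ (-1 / ((k : ℝ) - 2))) • v r) :
    Filter.Tendsto x Filter.atTop (nhds 0) := by
  have hk2 : (0 : ℝ) < k - 2 := sub_pos.mpr (by exact_mod_cast hk)
  simpa only [funext hx, mul_assoc, neg_div] using
    stmt_5_general (one_div_pos.mpr hk2) v α fun r => mul_neg_of_pos_of_neg hk2 (hneg r)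
end

section
/- Let n ≥ 1, k ≥ 3, let v_1, …, v_n be an orthonormal basis of the Euclidean space ℝⁿ, and let λ_1, …, λ_n ∈ ℝ and α_1, …, α_n ∈ ℝ. Suppose the set S = {r : λ_r·α_r^{k−2} > 0} is nonempty, and let t* = min_{r ∈ S} 1/((k−2)·λ_r·α_r^{k−2}) > 0. Define x : ℝ → ℝⁿ by x(t) = ∑_{r=1}^n α_r·(1 − (k−2)·λ_r·α_r^{k−2}·t)^{−1/(k−2)}·v_r. Then ‖x(t)‖ → +∞ as t → t* from within the interval [0, t*); that is, the solution blows up in finite time and the origin is unstable for this initial condition. -/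
/-!
An orthonormal expansion is at least as long as each of its coordinates. The coordinate of `x t`
along a direction `v r` whose index realizes the minimum `t*` is `α r * (1 - t / t*) ^ p` with
`α r ≠ 0` and `p = -1 / (k - 2) < 0`, so it alone already blows up as `t → t*` from the left.
-/

open Filter Topology

section Orthonormal

variable {𝕜 E ι : Type*} [RCLike 𝕜] [SeminormedAddCommGroup E] [InnerProductSpace 𝕜 E]
  {v : ι → E}

theorem inner_right_eq_of_hasSum_smul (hv : Orthonormal 𝕜 v) {a : ι → 𝕜} {y : E}
    (hy : HasSum (fun i => a i • v i) y) (i : ι) : inner 𝕜 (v i) y = a i := by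
  have hinner : HasSum (fun j => inner 𝕜 (v i) (a j • v j)) (inner 𝕜 (v i) y) :=
    hy.mapL (innerSL 𝕜 (v i))
  have hsingle : HasSum (fun j => inner 𝕜 (v i) (a j • v j)) (inner 𝕜 (v i) (a i • v i)) :=
    hasSum_single i fun j hji => by rw [inner_smul_right, hv.inner_eq_zero hji.symm, mul_zero]
  rw [hinner.unique hsingle, inner_smul_right, inner_self_eq_norm_sq_to_K, hv.norm_eq_one]
  simp

theorem norm_coeff_le_norm_of_hasSum_smul (hv : Orthonormal 𝕜 v) {a : ι → 𝕜} {y : E}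
    (hy : HasSum (fun i => a i • v i) y) (i : ι) : ‖a i‖ ≤ ‖y‖ :=
  calc ‖a i‖ = ‖inner 𝕜 (v i) y‖ := by rw [inner_right_eq_of_hasSum_smul hv hy]
    _ ≤ ‖v i‖ * ‖y‖ := norm_inner_le_norm _ _
    _ = ‖y‖ := by rw [hv.norm_eq_one, one_mul]

theorem tendsto_norm_atTop_of_tendsto_norm_coeff_atTop {T : Type*} {l : Filter T}
    (hv : Orthonormal 𝕜 v) {a : T → ι → 𝕜} {x : T → E}
    (hx : ∀ᶠ t in l, HasSum (fun i => a t i • v i) (x t)) (i : ι)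
    (ha : Tendsto (fun t => ‖a t i‖) l atTop) : Tendsto (fun t => ‖x t‖) l atTop :=
  tendsto_atTop_mono' l (hx.mono fun _ ht => norm_coeff_le_norm_of_hasSum_smul hv ht i) ha

end Orthonormal

theorem tendsto_one_sub_mul_nhdsLT_one_div {𝕜 : Type*} [Field 𝕜] [LinearOrder 𝕜]
    [IsStrictOrderedRing 𝕜] [TopologicalSpace 𝕜] [IsTopologicalRing 𝕜]
    {c : 𝕜} (hc : 0 < c) : Tendsto (fun t => 1 - c * t) (𝓝[<] (1 / c)) (𝓝[>] 0) := by
  have hcont : Continuous fun t : 𝕜 => 1 - c * t := by fun_prop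
  have hmaps : Set.MapsTo (fun t => 1 - c * t) (Set.Iio (1 / c)) (Set.Ioi 0) :=
    fun t ht => sub_pos.2 ((lt_div_iff₀' hc).1 ht)
  have hzero : 1 - c * (1 / c) = 0 := by rw [mul_one_div_cancel hc.ne', sub_self]
  simpa only [hzero] using
    (hcont.continuousWithinAt (x := 1 / c)).tendsto_nhdsWithin hmaps

theorem tendsto_norm_const_mul_one_sub_mul_rpow_atTop {a c p : ℝ} (ha : a ≠ 0) (hc : 0 < c)
    (hp : p < 0) : Tendsto (fun t => ‖a * (1 - c * t) ^ p‖) (𝓝[<] (1 / c)) atTop := by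
  have hpow : Tendsto (fun t => (1 - c * t) ^ p) (𝓝[<] (1 / c)) atTop :=
    (tendsto_rpow_neg_nhdsGT_zero hp).comp (tendsto_one_sub_mul_nhdsLT_one_div hc)
  simpa only [norm_mul, Function.comp_apply] using
    (tendsto_norm_atTop_atTop.comp hpow).const_mul_atTop (norm_pos_iff.2 ha)

theorem isLeast_image_inf' {ι R : Type*} [LinearOrder R] {s : Finset ι} (hs : s.Nonempty)
    (f : ι → R) : IsLeast (f '' s) (s.inf' hs f) := by
  obtain ⟨i, his, hi⟩ := s.exists_mem_eq_inf' hs f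
  exact ⟨⟨i, his, hi.symm⟩, Set.forall_mem_image.2 fun _ => Finset.inf'_le f⟩

theorem stmt_6_general {ι E : Type*} [SeminormedAddCommGroup E] [InnerProductSpace ℝ E]
    {v : ι → E} (hv : Orthonormal ℝ v) {k : ℕ} (hk : 3 ≤ k) {lam α : ι → ℝ} {tstar : ℝ}
    (htstar : IsLeast ((fun r => 1 / (((k : ℝ) - 2) * lam r * α r ^ (k - 2))) ''
      {r | 0 < lam r * α r ^ (k - 2)}) tstar)
    {x : ℝ → E}
    (hx : ∀ t ∈ Set.Ico 0 tstar, HasSum (fun r =>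
      (α r * (1 - ((k : ℝ) - 2) * lam r * α r ^ (k - 2) * t) ^ (-1 / ((k : ℝ) - 2))) • v r)
      (x t)) :
    0 < tstar ∧ Tendsto (fun t => ‖x t‖) (𝓝[Set.Ico 0 tstar] tstar) atTop := by
  have hk2 : (0 : ℝ) < k - 2 := sub_pos.2 (by exact_mod_cast hk)
  obtain ⟨⟨r, hr, rfl⟩, -⟩ := htstar
  have hrate : 0 < ((k : ℝ) - 2) * lam r * α r ^ (k - 2) := by
    rw [mul_assoc]
    exact mul_pos hk2 hr
  have hα : α r ≠ 0 := ne_zero_pow (by lia) (right_ne_zero_of_mul hr.ne')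
  have hcoord := tendsto_norm_const_mul_one_sub_mul_rpow_atTop hα hrate
    (div_neg_of_neg_of_pos neg_one_lt_zero hk2)
  exact ⟨one_div_pos.2 hrate, tendsto_norm_atTop_of_tendsto_norm_coeff_atTop hv
    (eventually_mem_nhdsWithin.mono hx) r
    (hcoord.mono_left (nhdsWithin_mono _ Set.Ico_subset_Iio_self))⟩

/-- Proposition 3, condition (3) together with the domain claim of Proposition 1:
if `S = {r : λ_r α_r^{k-2} > 0}` is nonempty and `t* = min_{r ∈ S} 1/((k-2) λ_r α_r^{k-2})`,
then `t* > 0` and `‖x t‖ → +∞` as `t → t*` from within `[0, t*)` (finite-time blow-up). -/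
theorem stmt_6 (n k : ℕ) (hn : 1 ≤ n) (hk : 3 ≤ k)
    (v : OrthonormalBasis (Fin n) ℝ (EuclideanSpace ℝ (Fin n)))
    (lam α : Fin n → ℝ)
    (S : Finset (Fin n)) (hS : ∀ r : Fin n, r ∈ S ↔ 0 < lam r * α r ^ (k - 2))
    (hSne : S.Nonempty)
    (tstar : ℝ)
    (htstar : tstar = S.inf' hSne fun r => 1 / (((k : ℝ) - 2) * lam r * α r ^ (k - 2)))
    (x : ℝ → EuclideanSpace ℝ (Fin n))
    (hx : ∀ t : ℝ, x t = ∑ r : Fin n,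
      (α r * (1 - ((k : ℝ) - 2) * lam r * α r ^ (k - 2) * t) ^ (-1 / ((k : ℝ) - 2))) • v r) :
    0 < tstar ∧
    Filter.Tendsto (fun t : ℝ => ‖x t‖)
      (nhdsWithin tstar (Set.Ico 0 tstar)) Filter.atTop := by
  refine stmt_6_general v.orthonormal hk ?_ fun t _ => hx t ▸ hasSum_fintype _
  simpa only [htstar, ← hS, SetLike.setOfPred_mem_eq] using isLeast_image_inf' hSne _
end

section
/- Let n ≥ 1 and let k ≥ 4 be an even natural number. Let v_1, …, v_n be an orthonormal basis of the Euclidean space ℝⁿ and let λ_1, …, λ_n ∈ ℝ with λ_r < 0 for all r. Then for every choice of coefficients α_1, …, α_n ∈ ℝ, the solution x(t) = ∑_{r=1}^n α_r·(1 − (k−2)·λ_r·α_r^{k−2}·t)^{−1/(k−2)}·v_r is defined for all t ≥ 0 (i.e., 1 − (k−2)·λ_r·α_r^{k−2}·t > 0 for all r and all t ≥ 0) and x(t) → 0 as t → +∞; that is, the odeco HPDS of odd degree k−1 is globally asymptotically stable at the origin. -/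
/-!
Along each `v r` the system is the scalar equation `x' = λ x ^ (k - 1)`. When `x ≠ 0` and
`λ x ^ (k - 2) < 0`, the base `1 - (k - 2) λ x ^ (k - 2) t` of the explicit solution stays positive
and grows linearly, so its negative power decays to zero; when `x = 0` the component vanishes.
For even `k` and negative `λ` the sign condition holds for every nonzero `x`.
-/

open Filter Topology

theorem one_sub_mul_pos_of_nonpos_of_nonneg {R : Type*} [Ring R] [PartialOrder R]
    [IsStrictOrderedRing R] {c t : R} (hc : c ≤ 0) (ht : 0 ≤ t) : 0 < 1 - c * t :=
  sub_pos.2 ((mul_nonpos_of_nonpos_of_nonneg hc ht).trans_lt one_pos)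

theorem tendsto_one_sub_const_mul_atTop_of_neg {𝕜 : Type*} [Field 𝕜] [LinearOrder 𝕜]
    [IsStrictOrderedRing 𝕜] {c : 𝕜} (hc : c < 0) :
    Tendsto (fun t : 𝕜 => 1 - c * t) atTop atTop := by
  simpa only [sub_eq_add_neg, neg_mul, id] using
    tendsto_atTop_add_const_left atTop 1 (tendsto_id.const_mul_atTop (neg_pos.2 hc))

theorem tendsto_const_mul_one_sub_mul_rpow_atTop_zero {a c p : ℝ} (hp : p < 0)
    (hc : a ≠ 0 → c < 0) : Tendsto (fun t : ℝ => a * (1 - c * t) ^ p) atTop (𝓝 0) := by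
  rcases eq_or_ne a 0 with rfl | ha
  · simp only [zero_mul, tendsto_const_nhds]
  · have rpow_tendsto : Tendsto (fun x : ℝ => x ^ p) atTop (𝓝 0) := by
      simpa only [neg_neg] using tendsto_rpow_neg_atTop (neg_pos.2 hp)
    simpa only [mul_zero, Function.comp_def] using
      (rpow_tendsto.comp (tendsto_one_sub_const_mul_atTop_of_neg (hc ha))).const_mul a

theorem tendsto_sum_smul_zero {ι X 𝕜 E : Type*} [Fintype ι] [Zero 𝕜] [TopologicalSpace 𝕜]
    [AddCommMonoid E] [TopologicalSpace E] [ContinuousAdd E] [SMulWithZero 𝕜 E]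
    [ContinuousSMul 𝕜 E] {l : Filter X} {f : ι → X → 𝕜} (hf : ∀ i, Tendsto (f i) l (𝓝 0))
    (v : ι → E) : Tendsto (fun x => ∑ i, f i x • v i) l (𝓝 0) := by
  simpa only [zero_smul, Finset.sum_const_zero] using
    tendsto_finsetSum Finset.univ fun i _ => (hf i).smul_const (v i)

theorem stmt_7_general {ι E : Type*} [Fintype ι] [AddCommMonoid E] [TopologicalSpace E]
    [ContinuousAdd E] [Module ℝ E] [ContinuousSMul ℝ E] {k : ℕ} (hk : 3 ≤ k) (v : ι → E)
    {lam α : ι → ℝ} (hα : ∀ r, α r ≠ 0 → lam r * α r ^ (k - 2) < 0) :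
    (∀ t : ℝ, 0 ≤ t → ∀ r, 0 < 1 - ((k : ℝ) - 2) * lam r * α r ^ (k - 2) * t) ∧
      Tendsto
        (fun t : ℝ => ∑ r,
          (α r * (1 - ((k : ℝ) - 2) * lam r * α r ^ (k - 2) * t) ^ (-1 / ((k : ℝ) - 2))) • v r)
        atTop (𝓝 0) := by
  have k_sub_two_pos : 0 < (k : ℝ) - 2 := sub_pos.2 (by exact_mod_cast hk)
  have rate_neg (r) (hr : α r ≠ 0) : ((k : ℝ) - 2) * lam r * α r ^ (k - 2) < 0 := by
    simpa only [mul_assoc] using mul_neg_of_pos_of_neg k_sub_two_pos (hα r hr)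
  have rate_nonpos (r) : ((k : ℝ) - 2) * lam r * α r ^ (k - 2) ≤ 0 := by
    rcases eq_or_ne (α r) 0 with hr | hr
    · rw [hr, zero_pow (by omega), mul_zero]
    · exact (rate_neg r hr).le
  have exponent_neg : -1 / ((k : ℝ) - 2) < 0 :=
    div_neg_of_neg_of_pos neg_one_lt_zero k_sub_two_pos
  exact ⟨fun t ht r => one_sub_mul_pos_of_nonpos_of_nonneg (rate_nonpos r) ht,
    tendsto_sum_smul_zero
      (fun r => tendsto_const_mul_one_sub_mul_rpow_atTop_zero exponent_neg (rate_neg r)) v⟩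

/-- Corollary 1 (asymptotic stability part): for even `k ≥ 4`, if all `λ_r < 0` then for every
initial condition the solution is defined on `[0, ∞)` and tends to `0`, i.e. the odeco HPDS of
odd degree `k-1` is globally asymptotically stable at the origin. -/
theorem stmt_7 (n k : ℕ) (hn : 1 ≤ n) (hk : 4 ≤ k) (hke : Even k)
    (v : OrthonormalBasis (Fin n) ℝ (EuclideanSpace ℝ (Fin n)))
    (lam : Fin n → ℝ) (hlam : ∀ r : Fin n, lam r < 0) :
    ∀ α : Fin n → ℝ,
      (∀ t : ℝ, 0 ≤ t → ∀ r : Fin n,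
        0 < 1 - ((k : ℝ) - 2) * lam r * α r ^ (k - 2) * t) ∧
      Filter.Tendsto
        (fun t : ℝ => ∑ r : Fin n,
          (α r * (1 - ((k : ℝ) - 2) * lam r * α r ^ (k - 2) * t) ^ (-1 / ((k : ℝ) - 2))) • v r)
        Filter.atTop (nhds (0 : EuclideanSpace ℝ (Fin n))) := by
  intro α
  exact stmt_7_general (by omega) v fun r hr =>
    mul_neg_of_neg_of_pos (hlam r) ((hke.tsub even_two).pow_pos hr)
end

section
/- Let n ≥ 1 and let k ≥ 4 be an even natural number. Let v_1, …, v_n be an orthonormal basis of the Euclidean space ℝⁿ and let λ_1, …, λ_n ∈ ℝ with λ_s > 0 for some index s. Then there exist coefficients α_1, …, α_n ∈ ℝ and a finite time t* > 0 such that the solution x(t) = ∑_{r=1}^n α_r·(1 − (k−2)·λ_r·α_r^{k−2}·t)^{−1/(k−2)}·v_r satisfies ‖x(t)‖ → +∞ as t → t* from within [0, t*); that is, the origin is unstable. -/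
/-!
The `r`-th coordinate of the solution is a multiple of a negative power of `1 - c_r t`, where
`c_r = (k - 2) λ_r α_r ^ (k - 2)`. If some `c_r` is positive, the largest one, `c_s`, is
responsible for the first singularity: every base `1 - c_r t` is positive on `[0, c_s⁻¹)`, while
the `s`-th coordinate tends to infinity in absolute value as `t → c_s⁻¹`. By orthonormality the
norm dominates that coordinate.
-/

open Filter Set Topology

/-- The rate `c` at which the base `1 - c * t` of a coordinate of the solution decreases, for
coefficient `lam` and initial value `a`. When positive, it is the reciprocal of the blow-up time
of that coordinate. -/
noncomputable def blowupRate (k : ℕ) (lam a : ℝ) : ℝ :=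
  ((k : ℝ) - 2) * lam * a ^ (k - 2)

/-- The explicit solution of the odeco system of degree `k - 1` with coefficients `lam` and initial
condition `∑ r, α r • v r`. It has this meaning only for `3 ≤ k` and as long as all the
bases `1 - blowupRate k (lam r) (α r) * t` are positive. -/
noncomputable def odecoSolution {ι E : Type*} [Fintype ι] [AddCommMonoid E] [Module ℝ E]
    (k : ℕ) (lam α : ι → ℝ) (v : ι → E) (t : ℝ) : E :=
  ∑ r, (α r * (1 - blowupRate k (lam r) (α r) * t) ^ (-1 / ((k : ℝ) - 2))) • v r

theorem tendsto_one_sub_mul_nhdsLT_inv {𝕜 : Type*} [Field 𝕜] [LinearOrder 𝕜]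
    [IsStrictOrderedRing 𝕜] [TopologicalSpace 𝕜] [IsTopologicalRing 𝕜] {c : 𝕜} (hc : 0 < c) :
    Tendsto (fun t ↦ 1 - c * t) (𝓝[<] c⁻¹) (𝓝[>] 0) := by
  refine tendsto_nhdsWithin_iff.2 ⟨?_, ?_⟩
  · have hcont : Continuous fun t : 𝕜 ↦ 1 - c * t := by fun_prop
    simpa [hc.ne'] using (hcont.tendsto c⁻¹).mono_left nhdsWithin_le_nhds
  · filter_upwards [self_mem_nhdsWithin] with t ht
    exact sub_pos.2 ((mul_lt_mul_of_pos_left ht hc).trans_eq (mul_inv_cancel₀ hc.ne'))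

theorem tendsto_abs_mul_one_sub_mul_rpow_atTop {a c p : ℝ} (ha : a ≠ 0) (hc : 0 < c)
    (hp : p < 0) : Tendsto (fun t ↦ |a * (1 - c * t) ^ p|) (𝓝[<] c⁻¹) atTop := by
  have hpow : Tendsto (fun t ↦ (1 - c * t) ^ p) (𝓝[<] c⁻¹) atTop :=
    (tendsto_rpow_neg_nhdsGT_zero hp).comp (tendsto_one_sub_mul_nhdsLT_inv hc)
  simpa only [abs_mul, Function.comp_def] using
    (tendsto_abs_atTop_atTop.comp hpow).const_mul_atTop (abs_pos.2 ha)

theorem norm_coeff_le_norm_sum_smul {𝕜 ι E : Type*} [RCLike 𝕜] [Fintype ι]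
    [SeminormedAddCommGroup E] [InnerProductSpace 𝕜 E] {v : ι → E} (hv : Orthonormal 𝕜 v)
    (c : ι → 𝕜) (i : ι) :
    ‖c i‖ ≤ ‖∑ j, c j • v j‖ := by
  calc ‖c i‖ = ‖inner 𝕜 (v i) (∑ j, c j • v j)‖ := by rw [hv.inner_right_fintype]
    _ ≤ ‖v i‖ * ‖∑ j, c j • v j‖ := norm_inner_le_norm _ _
    _ = ‖∑ j, c j • v j‖ := by rw [hv.norm_eq_one, one_mul]

theorem one_sub_mul_pos_of_le {𝕜 : Type*} [Field 𝕜] [LinearOrder 𝕜] [IsStrictOrderedRing 𝕜]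
    {b c t : 𝕜} (hc : 0 < c) (hbc : b ≤ c) (ht : t ∈ Ico 0 c⁻¹) : 0 < 1 - b * t := by
  refine sub_pos.2 ?_
  calc b * t ≤ c * t := mul_le_mul_of_nonneg_right hbc ht.1
    _ < c * c⁻¹ := mul_lt_mul_of_pos_left ht.2 hc
    _ = 1 := mul_inv_cancel₀ hc.ne'

section Odeco

variable {ι E : Type*} [Fintype ι] [SeminormedAddCommGroup E] [InnerProductSpace ℝ E]
  {v : ι → E} {k : ℕ} {lam α : ι → ℝ}

theorem tendsto_norm_odecoSolution_atTop (hk : 3 ≤ k) (hv : Orthonormal ℝ v) {s : ι}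
    (hs : 0 < blowupRate k (lam s) (α s)) :
    Tendsto (fun t ↦ ‖odecoSolution k lam α v t‖) (𝓝[<] (blowupRate k (lam s) (α s))⁻¹)
      atTop := by
  have hk2 : (0 : ℝ) < k - 2 := sub_pos.2 (by exact_mod_cast hk)
  have hα : α s ≠ 0 := ne_zero_pow (by omega) (right_ne_zero_of_mul hs.ne')
  have hexp : -1 / ((k : ℝ) - 2) < 0 := div_neg_of_neg_of_pos neg_one_lt_zero hk2
  exact tendsto_atTop_mono (fun _ ↦ norm_coeff_le_norm_sum_smul hv _ s)
    (tendsto_abs_mul_one_sub_mul_rpow_atTop hα hs hexp)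

/-- The positivity clause rules out a singularity before `tstar`, where the formula for the
solution would involve real powers of nonpositive numbers. -/
theorem stmt_8_general (hk : 3 ≤ k) (hv : Orthonormal ℝ v)
    (hlam : ∃ s, 0 < lam s * α s ^ (k - 2)) :
    ∃ tstar : ℝ, 0 < tstar ∧
      (∀ t ∈ Ico 0 tstar, ∀ r, 0 < 1 - blowupRate k (lam r) (α r) * t) ∧
      Tendsto (fun t ↦ ‖odecoSolution k lam α v t‖) (𝓝[<] tstar) atTop := by
  obtain ⟨s, hs⟩ := hlam
  have hrate : 0 < blowupRate k (lam s) (α s) := by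
    rw [blowupRate, mul_assoc]
    exact mul_pos (sub_pos.2 (by exact_mod_cast hk)) hs
  have : Nonempty ι := ⟨s⟩
  obtain ⟨m, hmax⟩ := Finite.exists_max fun r ↦ blowupRate k (lam r) (α r)
  have hm : 0 < blowupRate k (lam m) (α m) := hrate.trans_le (hmax s)
  exact ⟨_, inv_pos.2 hm, fun t ht r ↦ one_sub_mul_pos_of_le hm (hmax r) ht,
    tendsto_norm_odecoSolution_atTop hk hv hm⟩

end Odeco

/-- Corollary 1 (instability part): for even `k ≥ 4`, if some `λ_s > 0`, then there exist
coefficients `α` and a finite time `t* > 0` such that the corresponding solution blows up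
as `t → t*` from within `[0, t*)`, i.e. the origin is unstable. -/
theorem stmt_8 (n k : ℕ) (hn : 1 ≤ n) (hk : 4 ≤ k) (hke : Even k)
    (v : OrthonormalBasis (Fin n) ℝ (EuclideanSpace ℝ (Fin n)))
    (lam : Fin n → ℝ) (hlam : ∃ s : Fin n, 0 < lam s) :
    ∃ (α : Fin n → ℝ) (tstar : ℝ), 0 < tstar ∧
      Filter.Tendsto
        (fun t : ℝ => ‖(∑ r : Fin n,
          (α r * (1 - ((k : ℝ) - 2) * lam r * α r ^ (k - 2) * t) ^ (-1 / ((k : ℝ) - 2))) • v r :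
            EuclideanSpace ℝ (Fin n))‖)
        (nhdsWithin tstar (Set.Ico 0 tstar)) Filter.atTop := by
  obtain ⟨tstar, hpos, -, hblowup⟩ := stmt_8_general (α := fun _ ↦ 1) (by omega : 3 ≤ k)
    v.orthonormal (by simpa only [one_pow, mul_one] using hlam)
  exact ⟨_, tstar, hpos, hblowup.mono_left (nhdsWithin_mono _ Ico_subset_Iio_self)⟩
end

section
/- Let n ≥ 1 and m ≥ 1, and let T : (Fin (2m) → Fin n) → ℝ be a supersymmetric tensor of even order k = 2m, i.e., T(i ∘ σ) = T(i) for every permutation σ of Fin (2m). Let A be the real matrix indexed by pairs of tuples J, I : Fin m → Fin n with entries A_{J,I} = T(J_1, …, J_m, I_1, …, I_m) (the unfolding ψ(T)); A is symmetric. Suppose λ ∈ ℝ and v ∈ ℝⁿ with ‖v‖ = 1 satisfy the Z-eigenvalue equation: for every j, ∑_{i : Fin (2m−1) → Fin n} T(j, i_1, …, i_{2m−1})·∏_{p=1}^{2m−1} v_{i_p} = λ·v_j. Then λ ≤ μ_max, where μ_max is the largest eigenvalue of the symmetric matrix A. -/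
/-!
Since `v` is a unit vector, pairing the Z-eigenvalue equation with `v` gives `λ = T vᵏ`. Splitting
the `k = 2m` indices into two halves, `T vᵏ = wᵀ ψ(T) w` with `w = v ⊗ ⋯ ⊗ v` (`m` factors), and `w`
is again a unit vector because `‖w‖ = ‖v‖ᵐ`. So `λ` is a value of the quadratic form of `ψ(T)` on
the unit sphere, and no such value exceeds the largest eigenvalue.
-/

section Rayleigh

open Matrix
open scoped MatrixOrder

variable {𝕜 ι : Type*} [RCLike 𝕜] [Fintype ι] [DecidableEq ι] {A : Matrix ι ι 𝕜}

theorem le_algebraMap_iSup_eigenvalues (hA : A.IsHermitian) :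
    A ≤ algebraMap ℝ (Matrix ι ι 𝕜) (⨆ i, hA.eigenvalues i) := by
  refine le_algebraMap_of_spectrum_le (fun μ hμ ↦ ?_) hA
  rw [hA.spectrum_real_eq_range_eigenvalues] at hμ
  obtain ⟨i, rfl⟩ := hμ
  exact le_ciSup (Set.finite_range hA.eigenvalues).bddAbove i

theorem re_dotProduct_mulVec_le_iSup_eigenvalues (hA : A.IsHermitian) (x : ι → 𝕜) :
    RCLike.re (star x ⬝ᵥ A *ᵥ x) ≤ (⨆ i, hA.eigenvalues i) * RCLike.re (star x ⬝ᵥ x) := by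
  have h := (Matrix.le_iff.mp (le_algebraMap_iSup_eigenvalues hA)).re_dotProduct_nonneg x
  simpa [sub_mulVec, Algebra.algebraMap_eq_smul_one, smul_mulVec, RCLike.smul_re] using h

end Rayleigh

section Tensor

open Matrix

section TensorPow

variable {R ι : Type*} [CommSemiring R]

/-- The tensor power `v ⊗ ⋯ ⊗ v` with one factor for each element of `κ`, in coordinates. For an
order-`κ` tensor `T`, the value `T vᵏ` of its homogeneous form is `T ⬝ᵥ tensorPow κ v`. -/
def tensorPow (κ : Type*) [Fintype κ] (v : ι → R) (i : κ → ι) : R :=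
  ∏ p, v (i p)

theorem tensorPow_cons (v : ι → R) {l : ℕ} (j : ι) (i : Fin l → ι) :
    tensorPow (Fin (l + 1)) v (Fin.cons j i) = v j * tensorPow (Fin l) v i := by
  simp [tensorPow, Fin.prod_univ_succ]

theorem tensorPow_append (v : ι → R) {a b : ℕ} (J : Fin a → ι) (I : Fin b → ι) :
    tensorPow (Fin (a + b)) v (Fin.append J I) =
      tensorPow (Fin a) v J * tensorPow (Fin b) v I := by
  simp [tensorPow, Fin.prod_univ_add]

theorem tensorPow_dotProduct_tensorPow [Fintype ι] (κ : Type*) [Fintype κ] [DecidableEq κ]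
    (u v : ι → R) :
    tensorPow κ u ⬝ᵥ tensorPow κ v = (u ⬝ᵥ v) ^ Fintype.card κ := by
  simp only [dotProduct, tensorPow, ← Finset.prod_mul_distrib]
  rw [← Fintype.prod_sum fun (_ : κ) j ↦ u j * v j, Finset.prod_const, Finset.card_univ]

end TensorPow

section Contraction

variable {R ι : Type*} [CommSemiring R] [Fintype ι] {k l : ℕ}

/-- The vector `T vᵏ⁻¹`: all indices of `T` except the first are contracted with `v`. The order is
given as `k = l + 1`, which avoids truncated subtraction. -/
def tensorContract (h : k = l + 1) (T : (Fin k → ι) → R) (v : ι → R) (j : ι) : R :=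
  ∑ i : Fin l → ι, T ((Fin.cons j i : Fin (l + 1) → ι) ∘ Fin.cast h) * tensorPow (Fin l) v i

theorem dotProduct_tensorContract (h : k = l + 1) (T : (Fin k → ι) → R) (v : ι → R) :
    v ⬝ᵥ tensorContract h T v = T ⬝ᵥ tensorPow (Fin k) v := by
  subst h
  simp only [dotProduct, tensorContract, Finset.mul_sum, Fin.cast_refl, Function.comp_id]
  rw [← (Fin.consEquiv fun _ ↦ ι).sum_comp, Fintype.sum_prod_type]
  simp only [Fin.consEquiv, Equiv.coe_fn_mk, tensorPow_cons, mul_left_comm]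

end Contraction

section Unfolding

variable {R ι : Type*} {k a b : ℕ}

/-- The unfolding `ψ(T)` of a tensor into a matrix: the first `a` indices label the rows and the
last `b` the columns. -/
def tensorUnfolding (h : k = a + b) (T : (Fin k → ι) → R) :
    Matrix (Fin a → ι) (Fin b → ι) R :=
  of fun J I ↦ T (Fin.append J I ∘ Fin.cast h)

theorem dotProduct_tensorUnfolding_mulVec [CommSemiring R] [Fintype ι] (h : k = a + b)
    (T : (Fin k → ι) → R) (v : ι → R) :
    tensorPow (Fin a) v ⬝ᵥ tensorUnfolding h T *ᵥ tensorPow (Fin b) v =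
      T ⬝ᵥ tensorPow (Fin k) v := by
  subst h
  simp only [dotProduct, mulVec, tensorUnfolding, of_apply, Finset.mul_sum, Fin.cast_refl,
    Function.comp_id]
  rw [← (Fin.appendEquiv a b).sum_comp, Fintype.sum_prod_type]
  simp only [Fin.appendEquiv, Equiv.coe_fn_mk, tensorPow_append, mul_left_comm]

/-- A tensor is supersymmetric if its entries are invariant under all permutations of the
indices. -/
def IsSupersymmetric {κ : Type*} (T : (κ → ι) → R) : Prop :=
  ∀ (σ : Equiv.Perm κ) (i : κ → ι), T (i ∘ σ) = T i

theorem append_comp_finAddFlip (J : Fin a → ι) (I : Fin b → ι) :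
    Fin.append J I ∘ finAddFlip = Fin.append I J := by
  funext p
  induction p using Fin.addCases <;> simp [-Fin.natAdd_eq_addNat]

theorem IsSupersymmetric.transpose_tensorUnfolding {T : (Fin k → ι) → R}
    (hT : IsSupersymmetric T) (hab : k = a + b) (hba : k = b + a) :
    (tensorUnfolding hab T)ᵀ = tensorUnfolding hba T := by
  subst hab
  ext I J
  rw [transpose_apply]
  calc T (Fin.append J I)
      = T ((Fin.append I J ∘ Fin.cast hba) ∘ (finAddFlip.trans (finCongr hba.symm))) := by
        rw [← append_comp_finAddFlip I J]
        rfl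
    _ = T (Fin.append I J ∘ Fin.cast hba) := hT _ _

theorem IsSupersymmetric.isHermitian_tensorUnfolding [Star R] [TrivialStar R]
    {T : (Fin k → ι) → R} (hT : IsSupersymmetric T) (h : k = a + a) :
    (tensorUnfolding h T).IsHermitian :=
  (conjTranspose_eq_transpose_of_trivial _).trans (hT.transpose_tensorUnfolding h h)

end Unfolding

section ZEigenvalue

variable {ι : Type*} [Fintype ι] {k l m : ℕ}

theorem dotProduct_tensorPow_le_iSup_eigenvalues [DecidableEq ι] (h : k = m + m)
    {T : (Fin k → ι) → ℝ} (hA : (tensorUnfolding h T).IsHermitian) (v : ι → ℝ) :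
    T ⬝ᵥ tensorPow (Fin k) v ≤ (⨆ i, hA.eigenvalues i) * (v ⬝ᵥ v) ^ m := by
  calc T ⬝ᵥ tensorPow (Fin k) v
      = tensorPow (Fin m) v ⬝ᵥ tensorUnfolding h T *ᵥ tensorPow (Fin m) v :=
        (dotProduct_tensorUnfolding_mulVec h T v).symm
    _ ≤ (⨆ i, hA.eigenvalues i) * (tensorPow (Fin m) v ⬝ᵥ tensorPow (Fin m) v) :=
        re_dotProduct_mulVec_le_iSup_eigenvalues hA (tensorPow (Fin m) v)
    _ = (⨆ i, hA.eigenvalues i) * (v ⬝ᵥ v) ^ m := by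
        rw [tensorPow_dotProduct_tensorPow, Fintype.card_fin]

/-- `lam` is a Z-eigenvalue of the real tensor `T` with unit eigenvector `v`: `T vᵏ⁻¹ = lam v`. -/
structure IsZEigenpair (h : k = l + 1) (T : (Fin k → ι) → ℝ) (lam : ℝ)
    (v : EuclideanSpace ℝ ι) : Prop where
  norm_eq_one : ‖v‖ = 1
  tensorContract_eq : ∀ j, tensorContract h T v j = lam * v j

namespace IsZEigenpair

variable {h : k = l + 1} {T : (Fin k → ι) → ℝ} {lam : ℝ} {v : EuclideanSpace ℝ ι}

theorem dotProduct_self_eq_one (hv : IsZEigenpair h T lam v) : v.ofLp ⬝ᵥ v.ofLp = 1 := by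
  have := EuclideanSpace.real_norm_sq_eq v
  simpa [dotProduct, hv.norm_eq_one, pow_two] using this.symm

theorem dotProduct_tensorPow_eq (hv : IsZEigenpair h T lam v) :
    T ⬝ᵥ tensorPow (Fin k) v.ofLp = lam := by
  have hcontract : tensorContract h T v.ofLp = lam • v.ofLp := funext hv.tensorContract_eq
  rw [← dotProduct_tensorContract h, hcontract, dotProduct_smul, hv.dotProduct_self_eq_one,
    smul_eq_mul, mul_one]

end IsZEigenpair

theorem stmt_10_general [DecidableEq ι] (hl : k = l + 1) (hm : k = m + m)
    {T : (Fin k → ι) → ℝ} (hA : (tensorUnfolding hm T).IsHermitian) {lam : ℝ}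
    {v : EuclideanSpace ℝ ι} (hv : IsZEigenpair hl T lam v) :
    lam ≤ ⨆ i, hA.eigenvalues i := by
  simpa [hv.dotProduct_tensorPow_eq, hv.dotProduct_self_eq_one] using
    dotProduct_tensorPow_le_iSup_eigenvalues hm hA v.ofLp

end ZEigenvalue

end Tensor

/-- Lemma 1: for a supersymmetric tensor `T` of even order `2m`, every Z-eigenvalue `λ` of `T`
is bounded above by the largest eigenvalue `μ_max` of the symmetric unfolding matrix
`A = ψ(T)`, `A J I = T(J ⧺ I)`. -/
theorem stmt_10 (n m : ℕ) (hn : 1 ≤ n) (hm : 1 ≤ m)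
    (T : (Fin (2 * m) → Fin n) → ℝ)
    (hsymm : ∀ (σ : Equiv.Perm (Fin (2 * m))) (i : Fin (2 * m) → Fin n), T (i ∘ σ) = T i)
    (A : Matrix (Fin m → Fin n) (Fin m → Fin n) ℝ)
    (hA : ∀ J I : Fin m → Fin n,
      A J I = T (Fin.append J I ∘ Fin.cast (by omega : 2 * m = m + m)))
    (lam : ℝ) (v : EuclideanSpace ℝ (Fin n)) (hv : ‖v‖ = 1)
    (heig : ∀ j : Fin n,
      ∑ i : Fin (2 * m - 1) → Fin n,
        T (Fin.cons j i ∘ Fin.cast (by omega : 2 * m = 2 * m - 1 + 1)) *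
          ∏ p : Fin (2 * m - 1), v (i p)
      = lam * v j) :
    ∃ hAh : A.IsHermitian, lam ≤ ⨆ i : Fin m → Fin n, hAh.eigenvalues i := by
  obtain rfl : A = tensorUnfolding (two_mul m) T := Matrix.ext hA
  exact ⟨IsSupersymmetric.isHermitian_tensorUnfolding hsymm _, stmt_10_general _ _ _ ⟨hv, heig⟩⟩
end

section
/- Let k ≥ 3 be a natural number, a = (k−2)/(k−1), λ ∈ ℝ with λ ≠ 0, and b ∈ ℝ. Define g(a, z) = a·∑_{m=0}^∞ z^m/(a+m) for |z| < 1, and define H(c) = −g(a, −b/(λ·c^{k−1})) / ((k−2)·λ·c^{k−2}). Then for every c ∈ ℝ with c ≠ 0 and |b| < |λ|·|c|^{k−1}, the function H is differentiable at c with derivative H′(c) = 1/(λ·c^{k−1} + b). -/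
/-!
Write `Φ(a, z) = ∑ zᵐ / (a + m)`. Multiplying the `m`-th coefficient by `a + m` gives the Euler
equation `a Φ + z ∂Φ/∂z = 1 / (1 - z)`. Along `z = w / cᵖ` one has `c dz/dc = -p z`, so that
whenever `q = a p` the derivative of `Φ(a, w / cᵖ) / c ^ q` is
`-p (a Φ + z ∂Φ/∂z) / c ^ (q + 1) = -p / ((1 - z) c ^ (q + 1))`, which no longer involves `Φ`.
The theorem is the case `p = k - 1`, `q = k - 2`, `w = -b / λ`.
-/

open Filter Metric Topology

section BoundedCoefficients

variable {𝕜 : Type*} [RCLike 𝕜] {u : ℕ → 𝕜} {C : ℝ} {z : 𝕜}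

lemma summable_mul_pow_of_norm_le (hu : ∀ m, ‖u m‖ ≤ C) (hz : ‖z‖ < 1) :
    Summable fun m ↦ u m * z ^ m := by
  refine .of_norm_bounded ((summable_geometric_of_lt_one (norm_nonneg z) hz).mul_left C) fun m ↦ ?_
  rw [norm_mul, norm_pow]
  gcongr
  exact hu m

lemma summable_natCast_mul_pow_pred {r : ℝ} (hr₀ : 0 ≤ r) (hr : r < 1) :
    Summable fun m : ℕ ↦ m * r ^ (m - 1) := by
  rw [← summable_nat_add_iff 1]
  simpa using summable_choose_mul_geometric_of_norm_lt_one 1 (by rwa [Real.norm_of_nonneg hr₀])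

lemma norm_mul_natCast_mul_pow_pred_le (hu : ∀ m, ‖u m‖ ≤ C) {r : ℝ} (hz : ‖z‖ ≤ r) (m : ℕ) :
    ‖u m * (m * z ^ (m - 1))‖ ≤ C * (m * r ^ (m - 1)) := by
  rw [norm_mul, norm_mul, norm_pow, RCLike.norm_natCast]
  have hC : 0 ≤ C := (norm_nonneg _).trans (hu m)
  gcongr
  exact hu m

lemma summable_mul_natCast_mul_pow_pred_of_norm_le (hu : ∀ m, ‖u m‖ ≤ C) (hz : ‖z‖ < 1) :
    Summable fun m ↦ u m * (m * z ^ (m - 1)) :=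
  .of_norm_bounded ((summable_natCast_mul_pow_pred (norm_nonneg z) hz).mul_left C)
    (norm_mul_natCast_mul_pow_pred_le hu le_rfl)

lemma hasDerivAt_tsum_mul_pow_of_norm_le (hu : ∀ m, ‖u m‖ ≤ C) (hz : ‖z‖ < 1) :
    HasDerivAt (fun y ↦ ∑' m, u m * y ^ m) (∑' m, u m * (m * z ^ (m - 1))) z := by
  obtain ⟨r, hzr, hr⟩ := exists_between hz
  have hr₀ : 0 ≤ r := (norm_nonneg z).trans hzr.le
  have z_mem : z ∈ ball (0 : 𝕜) r := mem_ball_zero_iff.2 hzr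
  exact hasDerivAt_tsum_of_isPreconnected ((summable_natCast_mul_pow_pred hr₀ hr).mul_left C)
    isOpen_ball (isConnected_ball ((norm_nonneg z).trans_lt hzr)).isPreconnected
    (fun m y _ ↦ (hasDerivAt_pow m y).const_mul (u m))
    (fun m y hy ↦ norm_mul_natCast_mul_pow_pred_le hu (mem_ball_zero_iff.1 hy).le m)
    z_mem (summable_mul_pow_of_norm_le hu hz) z_mem

end BoundedCoefficients

lemma hasDerivAt_zpow_of_ne_zero {K : Type*} [NontriviallyNormedField K] {c : K}
    (hc : c ≠ 0) (n : ℤ) :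
    HasDerivAt (fun x : K ↦ x ^ n) (n * c ^ n / c) c := by
  simpa only [zpow_sub_one₀ hc, ← div_eq_mul_inv, mul_div_assoc]
    using hasDerivAt_zpow n c (.inl hc)

lemma natCast_div_add_natCast_ne_zero {K : Type*} [Field K] [CharZero K] {p q : ℕ} (hp : p ≠ 0)
    (hq : q ≠ 0) (m : ℕ) : (q / p + m : K) ≠ 0 := by
  have hp' : (p : K) ≠ 0 := Nat.cast_ne_zero.2 hp
  rw [div_add' _ _ _ hp']
  exact div_ne_zero (by norm_cast; lia) hp'

section LerchSeries

variable {𝕜 : Type*} [RCLike 𝕜] {a z : 𝕜}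

/-- The Lerch transcendent `Φ(z, 1, a) = ∑ zᵐ / (a + m)`, which is `₂F₁(1, a; a + 1; z) / a`. It is
meaningful for `‖z‖ < 1` and `a` not a nonpositive integer. -/
noncomputable def lerchSeries (a z : 𝕜) : 𝕜 := ∑' m : ℕ, z ^ m / (a + m)

lemma exists_norm_inv_add_natCast_le (a : 𝕜) : ∃ C : ℝ, ∀ m : ℕ, ‖(a + m)⁻¹‖ ≤ C := by
  have inv_tendsto : Tendsto (fun m : ℕ ↦ (a + m)⁻¹) atTop (𝓝 0) :=
    tendsto_inv₀_cobounded.comp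
      ((tendsto_const_add_cobounded a).comp tendsto_natCast_atTop_cobounded)
  obtain ⟨C, hC⟩ := inv_tendsto.norm.bddAbove_range
  exact ⟨C, fun m ↦ hC ⟨m, rfl⟩⟩

lemma hasDerivAt_lerchSeries (a : 𝕜) (hz : ‖z‖ < 1) :
    HasDerivAt (lerchSeries a) (∑' m : ℕ, (a + m)⁻¹ * (m * z ^ (m - 1))) z := by
  obtain ⟨C, hC⟩ := exists_norm_inv_add_natCast_le a
  refine (hasDerivAt_tsum_mul_pow_of_norm_le hC hz).congr_of_eventuallyEq (.of_forall fun y ↦ ?_)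
  simp only [lerchSeries, div_eq_inv_mul]

lemma mul_lerchSeries_add_mul_deriv (ha : ∀ m : ℕ, a + m ≠ 0) (hz : ‖z‖ < 1) :
    a * lerchSeries a z + z * deriv (lerchSeries a) z = (1 - z)⁻¹ := by
  obtain ⟨C, hC⟩ := exists_norm_inv_add_natCast_le a
  have value_summable := (summable_mul_pow_of_norm_le hC hz).mul_left a
  have deriv_summable := (summable_mul_natCast_mul_pow_pred_of_norm_le hC hz).mul_left z
  have ha₀ : a ≠ 0 := by simpa only [Nat.cast_zero, add_zero] using ha 0
  have coeff_identity (m : ℕ) :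
      a * ((a + m)⁻¹ * z ^ m) + z * ((a + m)⁻¹ * (m * z ^ (m - 1))) = z ^ m := by
    have ham := ha m
    cases m with
    | zero => simp [ha₀]
    | succ m => rw [Nat.add_sub_cancel]; field_simp; ring
  rw [(hasDerivAt_lerchSeries a hz).deriv, ← tsum_geometric_of_norm_lt_one hz]
  simp only [lerchSeries, div_eq_inv_mul]
  rw [← tsum_mul_left, ← tsum_mul_left, ← value_summable.tsum_add deriv_summable]
  exact tsum_congr coeff_identity

lemma hasDerivAt_lerchSeries_div_zpow {w c : 𝕜} {p q : ℤ} (ha : ∀ m : ℕ, a + m ≠ 0)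
    (hpq : (q : 𝕜) = a * p) (hc : c ≠ 0) (hw : ‖w‖ < ‖c‖ ^ p) :
    HasDerivAt (fun x ↦ lerchSeries a (w / x ^ p) / x ^ q)
      (-p * c ^ (p - q - 1) / (c ^ p - w)) c := by
  have hcp : c ^ p ≠ 0 := zpow_ne_zero p hc
  have hcq : c ^ q ≠ 0 := zpow_ne_zero q hc
  have arg_norm_lt : ‖w / c ^ p‖ < 1 := by
    rwa [norm_div, norm_zpow, div_lt_one (zpow_pos (norm_pos_iff.2 hc) p)]
  have arg_deriv : HasDerivAt (fun x ↦ w / x ^ p) (-p * (w / c ^ p) / c) c := by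
    refine ((hasDerivAt_const c w).div (hasDerivAt_zpow_of_ne_zero hc p) hcp).congr_deriv ?_
    field_simp
    ring
  have lerch_deriv :=
    (hasDerivAt_lerchSeries a arg_norm_lt).differentiableAt.hasDerivAt.comp c arg_deriv
  have euler := mul_lerchSeries_add_mul_deriv ha arg_norm_lt
  refine (lerch_deriv.div (hasDerivAt_zpow_of_ne_zero hc q) hcq).congr_deriv ?_
  simp only [Function.comp_apply]
  set z := w / c ^ p with hz
  calc (deriv (lerchSeries a) z * (-p * z / c) * c ^ q - lerchSeries a z * (q * c ^ q / c))
        / (c ^ q) ^ 2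
      = -p * (a * lerchSeries a z + z * deriv (lerchSeries a) z) / (c ^ q * c) := by
        rw [hpq]
        field_simp
        ring
    _ = -p * c ^ (p - q - 1) / (c ^ p - w) := by
        have one_sub_arg : 1 - z = (c ^ p - w) / c ^ p := by rw [hz, sub_div, div_self hcp]
        rw [euler, one_sub_arg, zpow_sub_one₀ hc, zpow_sub₀ hc]
        field_simp

lemma hasDerivAt_lerchSeries_neg_div_mul_zpow {lam b c : 𝕜} {p q : ℤ} (ha : ∀ m : ℕ, a + m ≠ 0)
    (hpq : (q : 𝕜) = a * p) (hlam : lam ≠ 0) (hc : c ≠ 0) (hb : ‖b‖ < ‖lam‖ * ‖c‖ ^ p) :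
    HasDerivAt (fun x ↦ lerchSeries a (-b / (lam * x ^ p)) / x ^ q)
      (-p * lam * c ^ (p - q - 1) / (lam * c ^ p + b)) c := by
  have quotient_norm_lt : ‖-b / lam‖ < ‖c‖ ^ p := by
    rwa [norm_div, norm_neg, div_lt_iff₀' (norm_pos_iff.2 hlam)]
  have denom_eq : c ^ p - -b / lam = (lam * c ^ p + b) / lam := by
    rw [neg_div, sub_neg_eq_add, add_div, mul_div_cancel_left₀ _ hlam]
  have lerch_deriv := hasDerivAt_lerchSeries_div_zpow ha hpq hc quotient_norm_lt
  simp only [div_div] at lerch_deriv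
  refine lerch_deriv.congr_deriv ?_
  rw [denom_eq, div_div_eq_mul_div, mul_right_comm]

end LerchSeries

theorem stmt_12_general {𝕜 : Type*} [RCLike 𝕜] {k : ℕ} (hk : 3 ≤ k) {a lam b c : 𝕜}
    (ha : a = ((k : 𝕜) - 2) / ((k : 𝕜) - 1)) (hbc : ‖b‖ < ‖lam‖ * ‖c‖ ^ (k - 1)) :
    HasDerivAt
      (fun x ↦ -(a * lerchSeries a (-b / (lam * x ^ (k - 1)))) /
        (((k : 𝕜) - 2) * lam * x ^ (k - 2)))
      (1 / (lam * c ^ (k - 1) + b)) c := by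
  obtain ⟨p, q, hp, hq, rfl, hpq⟩ : ∃ p q : ℕ, k - 1 = p ∧ k - 2 = q ∧ k = p + 1 ∧ p = q + 1 :=
    ⟨k - 1, k - 2, rfl, rfl, by lia, by lia⟩
  have cast_sub_one : ((p + 1 : ℕ) : 𝕜) - 1 = p := by push_cast; ring
  have cast_sub_two : ((p + 1 : ℕ) : 𝕜) - 2 = q := by rw [hpq]; push_cast; ring
  rw [cast_sub_one, cast_sub_two] at ha
  rw [hp] at hbc
  rw [hp, hq, cast_sub_two]
  have hp₀ : (p : 𝕜) ≠ 0 := Nat.cast_ne_zero.2 (by lia)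
  have hq₀ : (q : 𝕜) ≠ 0 := Nat.cast_ne_zero.2 (by lia)
  have hlam : lam ≠ 0 := by rintro rfl; simp [(norm_nonneg b).not_gt] at hbc
  have hc : c ≠ 0 := by rintro rfl; simp [hpq, (norm_nonneg b).not_gt] at hbc
  have lerch_deriv := hasDerivAt_lerchSeries_neg_div_mul_zpow (p := p) (q := q) (b := b)
    (ha ▸ natCast_div_add_natCast_ne_zero (by lia) (by lia))
    (by simp [ha, hp₀]) hlam hc (by simpa only [zpow_natCast] using hbc)
  have exponent_eq : (p - q - 1 : ℤ) = 0 := by lia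
  simp only [exponent_eq, zpow_zero, zpow_natCast, Int.cast_natCast] at lerch_deriv
  refine ((lerch_deriv.const_mul (-a / (q * lam))).congr_of_eventuallyEq
    (.of_forall fun x ↦ by ring)).congr_deriv ?_
  rw [ha]
  field_simp

/-- The antiderivative identity underlying Proposition 4: with `a = (k-2)/(k-1)` and
`g(a, z) = a ∑_{m} z^m/(a+m)`, the function `H(c) = -g(a, -b/(λ c^{k-1}))/((k-2) λ c^{k-2})`
is an antiderivative of `1/(λ c^{k-1} + b)` wherever `c ≠ 0` and `|b| < |λ| |c|^{k-1}`. -/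
theorem stmt_12 (k : ℕ) (hk : 3 ≤ k) (a lam b : ℝ) (hlam : lam ≠ 0)
    (ha : a = ((k : ℝ) - 2) / ((k : ℝ) - 1))
    (g : ℝ → ℝ → ℝ) (hg : ∀ a' z : ℝ, g a' z = a' * ∑' m : ℕ, z ^ m / (a' + m))
    (H : ℝ → ℝ)
    (hH : ∀ c : ℝ, H c =
      -(g a (-b / (lam * c ^ (k - 1)))) / (((k : ℝ) - 2) * lam * c ^ (k - 2))) :
    ∀ c : ℝ, c ≠ 0 → |b| < |lam| * |c| ^ (k - 1) →
      HasDerivAt H (1 / (lam * c ^ (k - 1) + b)) c := by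
  intro c _ hbc
  simpa only [funext hH, hg, lerchSeries] using stmt_12_general hk ha hbc
end

section
/- Let k ≥ 3 be a natural number, a = (k−2)/(k−1), λ ∈ ℝ with λ ≠ 0, b ∈ ℝ, α ∈ ℝ, and T ≥ 0. Suppose c : ℝ → ℝ satisfies c(0) = α and for every s ∈ [0, T], c is differentiable at s with c′(s) = λ·c(s)^{k−1} + b, c(s) ≠ 0, and |b| < |λ|·|c(s)|^{k−1}. Then T = −g(a, −b/(λ·c(T)^{k−1})) / ((k−2)·λ·c(T)^{k−2}) + g(a, −b/(λ·α^{k−1})) / ((k−2)·λ·α^{k−2}), where g(a, z) = a·∑_{m=0}^∞ z^m/(a+m). -/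
/-!
The function `h(z) = ₂F₁(1, a; a + 1; z) = ∑ a z ^ m / (a + m)` satisfies the first order equation
`a h + z h' = a / (1 - z)`: the Euler operator `z d/dz` multiplies the `m`-th term by `m`, which
turns the series into a geometric one. For `a = n / (n + 1)` this says exactly that
`x ↦ -h(-b / (λ x ^ (n + 1))) / (n λ x ^ n)` is a primitive of `1 / (λ x ^ (n + 1) + b)`, so
separating variables in `c' = λ c ^ (n + 1) + b` gives the elapsed time.
-/

open scoped ENNReal

theorem mem_eball_zero_one_iff {E : Type*} [SeminormedAddCommGroup E] {y : E} :
    y ∈ Metric.eball (0 : E) 1 ↔ ‖y‖ < 1 := by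
  rw [← ENNReal.ofReal_one, Metric.eball_ofReal, mem_ball_zero_iff]

section NontriviallyNormedField

variable {𝕜 E F : Type*} [NontriviallyNormedField 𝕜] [NormedAddCommGroup E] [NormedSpace 𝕜 E]
  [NormedAddCommGroup F] [NormedSpace 𝕜 F] [CompleteSpace F]

theorem hasSum_nsmul_fderiv_apply_self {f : E → F} {p : FormalMultilinearSeries 𝕜 E F}
    {r : ℝ≥0∞} (hf : HasFPowerSeriesOnBall f p 0 r) {y : E} (hy : y ∈ Metric.eball 0 r) :
    HasSum (fun n : ℕ ↦ n • p n fun _ ↦ y) (fderiv 𝕜 f y y) := by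
  have hderiv := (hf.fderiv.hasSum hy).mapL (ContinuousLinearMap.apply 𝕜 F y)
  simp only [zero_add, ContinuousLinearMap.apply_apply,
    FormalMultilinearSeries.derivSeries_apply_diag] at hderiv
  rw [← hasSum_nat_add_iff' 1]
  simpa using hderiv

theorem hasDerivAt_pow_of_ne_zero {x : 𝕜} (hx : x ≠ 0) (n : ℕ) :
    HasDerivAt (fun x ↦ x ^ n) (n * x ^ n / x) x := by
  refine (hasDerivAt_pow n x).congr_deriv ?_
  rcases n with _ | n
  · simp
  · rw [Nat.add_sub_cancel, pow_succ, ← mul_assoc, mul_div_cancel_right₀ _ hx]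

end NontriviallyNormedField

section HypergeometricSeries

theorem ascPochhammer_eval_mul_add_natCast {R : Type*} [CommSemiring R] (a : R) (n : ℕ) :
    (ascPochhammer R n).eval a * (a + n) = a * (ascPochhammer R n).eval (a + 1) := by
  rw [← ascPochhammer_succ_eval, ascPochhammer_succ_left]
  simp

variable {K : Type*} [Field K] [CharZero K] {a : K}

theorem div_add_one_add_natCast_ne_zero {n : ℕ} (hn : n ≠ 0) (m : ℕ) :
    (n / (n + 1) : K) + m ≠ 0 := by
  have hden : (n + 1 : K) ≠ 0 := n.cast_add_one_ne_zero
  have hnum : n + m * (n + 1) ≠ 0 := by positivity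
  rw [div_add' _ _ _ hden]
  exact div_ne_zero (mod_cast hnum) hden

theorem ordinaryHypergeometricCoefficient_one_self_add_one (ha : ∀ n : ℕ, a + n ≠ 0) (n : ℕ) :
    ordinaryHypergeometricCoefficient 1 a (a + 1) n = a / (a + n) := by
  have hpoch : (ascPochhammer K n).eval (a + 1) ≠ 0 := by
    rw [Ne, ascPochhammer_eval_eq_zero_iff]
    rintro ⟨m, -, hm⟩
    exact ha (m + 1) (by push_cast; linear_combination hm)
  have hfact : (n.factorial : K) ≠ 0 := mod_cast n.factorial_ne_zero
  rw [ordinaryHypergeometricCoefficient, ascPochhammer_eval_one, inv_mul_cancel₀ hfact, one_mul,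
    ← div_eq_mul_inv, div_eq_div_iff hpoch (ha n), ascPochhammer_eval_mul_add_natCast]

theorem ordinaryHypergeometric_one_self_add_one [TopologicalSpace K] [IsTopologicalRing K]
    [T2Space K] (ha : ∀ n : ℕ, a + n ≠ 0) (z : K) :
    ₂F₁ 1 a (a + 1) z = a * ∑' n : ℕ, z ^ n / (a + n) := by
  rw [ordinaryHypergeometric_eq_tsum, ← tsum_mul_left]
  refine tsum_congr fun n ↦ ?_
  have hcoeff := ordinaryHypergeometricCoefficient_one_self_add_one ha n
  rw [ordinaryHypergeometricCoefficient] at hcoeff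
  rw [hcoeff, smul_eq_mul, div_mul_eq_mul_div, mul_div_assoc]

end HypergeometricSeries

section RCLike

variable {𝕜 : Type*} [RCLike 𝕜] {a lam b x z : 𝕜}

theorem hasFPowerSeriesOnBall_ordinaryHypergeometric {a b c : 𝕜}
    (habc : ∀ n : ℕ, (n : 𝕜) ≠ -a ∧ (n : 𝕜) ≠ -b ∧ (n : 𝕜) ≠ -c) :
    HasFPowerSeriesOnBall (₂F₁ a b c : 𝕜 → 𝕜) (ordinaryHypergeometricSeries 𝕜 a b c) 0 1 := by
  have hradius := ordinaryHypergeometricSeries_radius_eq_one 𝕜 a b c habc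
  simpa only [hradius] using!
    (ordinaryHypergeometricSeries 𝕜 a b c).hasFPowerSeriesOnBall (by simp [hradius])

theorem hasFPowerSeriesOnBall_ordinaryHypergeometric_one_self_add_one
    (ha : ∀ n : ℕ, a + n ≠ 0) :
    HasFPowerSeriesOnBall (₂F₁ 1 a (a + 1) : 𝕜 → 𝕜)
      (ordinaryHypergeometricSeries 𝕜 1 a (a + 1)) 0 1 := by
  refine hasFPowerSeriesOnBall_ordinaryHypergeometric fun n ↦ ⟨?_, ?_, ?_⟩
  · exact fun h ↦ n.cast_add_one_ne_zero (R := 𝕜) (by linear_combination h)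
  · exact fun h ↦ ha n (by linear_combination h)
  · exact fun h ↦ ha (n + 1) (by push_cast; linear_combination h)

theorem mul_ordinaryHypergeometric_add_mul_deriv (ha : ∀ n : ℕ, a + n ≠ 0) (hz : ‖z‖ < 1) :
    a * ₂F₁ 1 a (a + 1) z + z * deriv (₂F₁ 1 a (a + 1)) z = a / (1 - z) := by
  have hseries := hasFPowerSeriesOnBall_ordinaryHypergeometric_one_self_add_one ha
  have hz_mem := mem_eball_zero_one_iff.mpr hz
  have hsum := (hseries.hasSum hz_mem).mul_left a
  have heuler := hasSum_nsmul_fderiv_apply_self hseries hz_mem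
  have hgeom := (hasSum_geometric_of_norm_lt_one hz).mul_left a
  rw [zero_add] at hsum
  rw [fderiv_eq_smul_deriv, smul_eq_mul] at heuler
  rw [← div_eq_mul_inv] at hgeom
  refine (hsum.add heuler).unique ?_
  convert hgeom using 2 with n
  rw [ordinaryHypergeometricSeries, FormalMultilinearSeries.ofScalars_apply_eq,
    ordinaryHypergeometricCoefficient_one_self_add_one ha, smul_eq_mul, nsmul_eq_mul, ← add_mul,
    ← mul_assoc, mul_div_cancel₀ _ (ha n)]

theorem hasDerivAt_ordinaryHypergeometric_div_pow {β : 𝕜} {n p : ℕ} (ha : ∀ m : ℕ, a + m ≠ 0)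
    (hap : a * p = n) (hx : x ≠ 0) (hβ : ‖β‖ < ‖x‖ ^ p) :
    HasDerivAt (fun x ↦ ₂F₁ 1 a (a + 1) (β / x ^ p) / x ^ n)
      (-(n / (x * x ^ n * (1 - β / x ^ p)))) x := by
  set h : 𝕜 → 𝕜 := ₂F₁ 1 a (a + 1)
  set z := β / x ^ p with hz_def
  have hz : ‖z‖ < 1 := by rwa [norm_div, norm_pow, div_lt_one (by positivity)]
  have hh : HasDerivAt h (deriv h z) z :=
    ((hasFPowerSeriesOnBall_ordinaryHypergeometric_one_self_add_one ha).analyticAt_of_mem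
      (mem_eball_zero_one_iff.mpr hz)).differentiableAt.hasDerivAt
  have hsub : HasDerivAt (fun x ↦ β / x ^ p) (-(p * z / x)) x := by
    refine ((hasDerivAt_const x β).fun_div (hasDerivAt_pow_of_ne_zero hx p)
      (pow_ne_zero p hx)).congr_deriv ?_
    rw [hz_def]
    field_simp
    ring
  refine ((hh.comp x hsub).fun_div (hasDerivAt_pow_of_ne_zero hx n)
    (pow_ne_zero n hx)).congr_deriv ?_
  calc (deriv h z * -(p * z / x) * x ^ n - h z * (n * x ^ n / x)) / (x ^ n) ^ 2
      = -(p / (x * x ^ n) * (a * h z + z * deriv h z)) := by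
        rw [← hap]; field_simp; ring
    _ = -(n / (x * x ^ n * (1 - z))) := by
        rw [mul_ordinaryHypergeometric_add_mul_deriv ha hz, div_mul_div_comm, mul_comm (p : 𝕜),
          hap]

theorem hasDerivAt_primitive_inv_mul_pow_add {n : ℕ} (hn : n ≠ 0)
    (hb : ‖b‖ < ‖lam‖ * ‖x‖ ^ (n + 1)) :
    HasDerivAt
      (fun x ↦ -₂F₁ 1 (n / (n + 1) : 𝕜) (n / (n + 1) + 1) (-b / (lam * x ^ (n + 1))) /
        (n * lam * x ^ n))
      (lam * x ^ (n + 1) + b)⁻¹ x := by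
  obtain ⟨hlam, hx⟩ : lam ≠ 0 ∧ x ≠ 0 := by simpa using ((norm_nonneg b).trans_lt hb).ne'
  have hβ : ‖-b / lam‖ < ‖x‖ ^ (n + 1) := by
    rwa [norm_div, norm_neg, div_lt_iff₀' (norm_pos_iff.mpr hlam)]
  have hn' : (n : 𝕜) ≠ 0 := mod_cast hn
  have hap : (n / (n + 1) : 𝕜) * (n + 1 : ℕ) = n := by
    push_cast
    exact div_mul_cancel₀ _ n.cast_add_one_ne_zero
  have hderiv := (hasDerivAt_ordinaryHypergeometric_div_pow
    (div_add_one_add_natCast_ne_zero hn) hap hx hβ).const_mul (-(n * lam)⁻¹)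
  simp only [div_div] at hderiv
  refine (hderiv.congr_deriv ?_).congr_of_eventuallyEq (.of_forall fun y ↦ ?_)
  · rw [← pow_succ']
    field_simp
    rw [sub_neg_eq_add]
  · simp only [div_eq_mul_inv, mul_inv]
    ring

theorem sub_eq_sub_of_hasDerivAt_inv {v F : 𝕜 → 𝕜} {c : ℝ → 𝕜} {I : Set ℝ} (hI : Convex ℝ I)
    (hc : ∀ s ∈ I, HasDerivWithinAt c (v (c s)) I s)
    (hF : ∀ s ∈ I, HasDerivAt F (v (c s))⁻¹ (c s)) (hv : ∀ s ∈ I, v (c s) ≠ 0)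
    {t₀ t₁ : ℝ} (ht₀ : t₀ ∈ I) (ht₁ : t₁ ∈ I) :
    F (c t₁) - F (c t₀) = ((t₁ - t₀ : ℝ) : 𝕜) := by
  have hderiv : ∀ s ∈ I, HasDerivWithinAt (fun s ↦ F (c s) - (s : 𝕜)) 0 I s := fun s hs ↦ by
    have hFc : HasDerivWithinAt (fun s ↦ F (c s)) 1 I s :=
      ((hF s hs).comp_hasDerivWithinAt s (hc s hs)).congr_deriv (inv_mul_cancel₀ (hv s hs))
    have hid : HasDerivWithinAt (fun s : ℝ ↦ (s : 𝕜)) 1 I s := by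
      simpa using! (RCLike.ofRealCLM (K := 𝕜)).hasDerivWithinAt (s := I) (x := s)
    simpa using hFc.fun_sub hid
  have hconst := hI.norm_image_sub_le_of_norm_hasDerivWithin_le hderiv
    (fun _ _ ↦ norm_zero.le) ht₀ ht₁
  rw [zero_mul, norm_le_zero_iff] at hconst
  push_cast
  linear_combination hconst

theorem stmt_13_general {k : ℕ} (hk : 3 ≤ k) (ha : a = ((k : 𝕜) - 2) / ((k : 𝕜) - 1))
    {c : ℝ → 𝕜} {I : Set ℝ} (hI : Convex ℝ I)
    (hc : ∀ s ∈ I, HasDerivWithinAt c (lam * c s ^ (k - 1) + b) I s)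
    (hb : ∀ s ∈ I, ‖b‖ < ‖lam‖ * ‖c s‖ ^ (k - 1)) {t₀ t₁ : ℝ} (ht₀ : t₀ ∈ I) (ht₁ : t₁ ∈ I) :
    ((t₁ - t₀ : ℝ) : 𝕜) =
      -₂F₁ 1 a (a + 1) (-b / (lam * c t₁ ^ (k - 1))) /
          (((k : 𝕜) - 2) * lam * c t₁ ^ (k - 2)) +
        ₂F₁ 1 a (a + 1) (-b / (lam * c t₀ ^ (k - 1))) /
          (((k : 𝕜) - 2) * lam * c t₀ ^ (k - 2)) := by
  obtain ⟨n, rfl⟩ : ∃ n, k = n + 2 := ⟨k - 2, by lia⟩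
  have hn : n ≠ 0 := by lia
  have hk₁ : ((n + 2 : ℕ) : 𝕜) - 1 = n + 1 := by push_cast; ring
  have hk₂ : ((n + 2 : ℕ) : 𝕜) - 2 = n := by push_cast; ring
  rw [hk₁, hk₂] at ha
  rw [hk₂, ha]
  have hv : ∀ s ∈ I, lam * c s ^ (n + 1) + b ≠ 0 := fun s hs h ↦ by
    have hnorm := congrArg norm (eq_neg_of_add_eq_zero_right h)
    rw [norm_neg, norm_mul, norm_pow] at hnorm
    exact (hb s hs).ne hnorm
  have htime := sub_eq_sub_of_hasDerivAt_inv (v := fun x ↦ lam * x ^ (n + 1) + b) hI hc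
    (fun s hs ↦ hasDerivAt_primitive_inv_mul_pow_add hn (hb s hs)) hv ht₀ ht₁
  rw [← htime]
  simp only [Nat.add_sub_cancel, show n + 2 - 1 = n + 1 by lia]
  ring

end RCLike

/-- Proposition 4: implicit solution of the scalar coefficient ODE `ċ = λ c^{k-1} + b` of an
odeco HPDS with constant control, via the Gauss hypergeometric function
`g(a, z) = a ∑_m z^m/(a+m)` with `a = (k-2)/(k-1)`. -/
theorem stmt_13 (k : ℕ) (hk : 3 ≤ k) (a lam b α T : ℝ) (hlam : lam ≠ 0) (hT : 0 ≤ T)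
    (ha : a = ((k : ℝ) - 2) / ((k : ℝ) - 1))
    (g : ℝ → ℝ → ℝ) (hg : ∀ a' z : ℝ, g a' z = a' * ∑' m : ℕ, z ^ m / (a' + m))
    (c : ℝ → ℝ) (hc0 : c 0 = α)
    (hode : ∀ s ∈ Set.Icc (0 : ℝ) T,
      HasDerivAt c (lam * c s ^ (k - 1) + b) s ∧ c s ≠ 0 ∧ |b| < |lam| * |c s| ^ (k - 1)) :
    T = -(g a (-b / (lam * c T ^ (k - 1)))) / (((k : ℝ) - 2) * lam * c T ^ (k - 2))
        + g a (-b / (lam * α ^ (k - 1))) / (((k : ℝ) - 2) * lam * α ^ (k - 2)) := by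
  have ha₀ : 0 < a := ha ▸ by
    have : (3 : ℝ) ≤ k := mod_cast hk
    exact div_pos (by linarith) (by linarith)
  have hg' (z : ℝ) : g a z = ₂F₁ 1 a (a + 1) z := by
    rw [hg, ordinaryHypergeometric_one_self_add_one fun n ↦ by positivity]
  rw [hg', hg', ← hc0]
  simpa using stmt_13_general hk ha (convex_Icc 0 T) (fun s hs ↦ (hode s hs).1.hasDerivWithinAt)
    (fun s hs ↦ (hode s hs).2.2) (Set.left_mem_Icc.mpr hT) (Set.right_mem_Icc.mpr hT)
end
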